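/- For all t > 0, 0 < s < t, τ ≥ 0 and x ∈ ℝ², ∫_{ℝ²} ∇G(t−s, x−y) · (G(s, y) ∇G(s+τ, y)) dy = (s/(4π(2s+τ)²)) ΔG(t − s²/(2s+τ), x). -/

import Mathlib

open MeasureTheory Real Filter Asymptotics ENNReal

noncomputable section

/-- The plane `ℝ²`, realized as a Euclidean space. -/
abbrev E2 : Type := EuclideanSpace ℝ (Fin 2)

/-- The two-dimensional heat kernel `G(t,x) = (4πt)⁻¹ exp(-|x|²/(4t))`. -/
def G (t : ℝ) (x : E2) : ℝ := (4 * π * t)⁻¹ * Real.exp (-‖x‖ ^ 2 / (4 * t))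

/-- Partial derivative `∂_j` in the `j`-th coordinate direction. -/
def pd (j : Fin 2) (f : E2 → ℝ) (x : E2) : ℝ := fderiv ℝ f x (EuclideanSpace.single j 1)

/-- The decay exponent `γ_q = 1 - 1/q` (with the convention `γ_∞ = 1`). -/
def gam (q : ℝ≥0∞) : ℝ := 1 - (q.toReal)⁻¹

/-- The Laplacian `Δ = ∂₁² + ∂₂²`. -/
def lap (f : E2 → ℝ) (x : E2) : ℝ := pd 0 (pd 0 f) x + pd 1 (pd 1 f) x

lemma hasFDerivAt_G (a : ℝ) (z : E2) :
    HasFDerivAt (G a) ((-(1 / (2 * a)) * G a z) • innerSL ℝ z) z := by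
  have h1 : HasFDerivAt (fun x : E2 => ‖x‖ ^ 2) (2 • innerSL ℝ z) z :=
    (hasStrictFDerivAt_norm_sq z).hasFDerivAt
  have h2 : HasFDerivAt (fun x : E2 => (4 * π * a)⁻¹ * Real.exp (-(1 / (4 * a)) * ‖x‖ ^ 2)) _ z :=
    ((h1.const_mul (-(1 / (4 * a)))).exp).const_mul ((4 * π * a)⁻¹)
  have e : G a = (fun x : E2 => (4 * π * a)⁻¹ * Real.exp (-(1 / (4 * a)) * ‖x‖ ^ 2)) := by
    funext x
    unfold G
    congr 2
    ring
  rw [e]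
  refine h2.congr_fderiv ?_
  ext v
  simp
  ring

lemma pd_G (a : ℝ) (j : Fin 2) : pd j (G a) = fun z => -(1 / (2 * a)) * (z j * G a z) := by
  funext z
  unfold pd
  rw [(hasFDerivAt_G a z).fderiv]
  simp [EuclideanSpace.inner_single_right]
  ring

lemma pd_pd_G (a : ℝ) (j : Fin 2) (z : E2) :
    pd j (pd j (G a)) z = -(1 / (2 * a)) * (G a z - (1 / (2 * a)) * (z j) ^ 2 * G a z) := by
  rw [pd_G]
  unfold pd
  have h1 : HasFDerivAt (fun z : E2 => z j) (EuclideanSpace.proj j : E2 →L[ℝ] ℝ) z :=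
    (EuclideanSpace.proj j : E2 →L[ℝ] ℝ).hasFDerivAt
  have h2 : HasFDerivAt (fun z : E2 => -(1 / (2 * a)) * (z j * G a z)) _ z :=
    (h1.mul (hasFDerivAt_G a z)).const_mul (-(1 / (2 * a)))
  rw [h2.fderiv]
  simp [EuclideanSpace.inner_single_right]
  ring

lemma lap_G (a : ℝ) (ha : 0 < a) (z : E2) :
    lap (G a) z = (‖z‖ ^ 2 / (4 * a ^ 2) - 1 / a) * G a z := by
  unfold lap
  rw [pd_pd_G, pd_pd_G, EuclideanSpace.norm_sq_eq]
  simp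
  field_simp
  ring

lemma moment (q : ℝ) (hq : -2 < q) (b : ℝ) (hb : 0 < b) :
    ∫ u : E2, ‖u‖ ^ q * Real.exp (-b * ‖u‖ ^ (2:ℝ)) =
      (2 * π / 2) * b ^ (-(q + 2) / 2) * Real.Gamma ((q + 2) / 2) := by
  rw [← Complex.integral_rpow_mul_exp_neg_mul_rpow (p := 2) (by norm_num) hq hb]
  rw [← Complex.orthonormalBasisOneI.measurePreserving_repr.integral_comp
    Complex.orthonormalBasisOneI.repr.toHomeomorph.measurableEmbedding]
  simp

lemma int0 (q : ℝ) (hq : 0 < q) : ∫ u : E2, G q u = 1 := by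
  have h := moment 0 (by norm_num) (1 / (4 * q)) (by positivity)
  have e : ∀ u : E2, G q u = (4 * π * q)⁻¹ * (‖u‖ ^ (0:ℝ) * Real.exp (-(1 / (4 * q)) * ‖u‖ ^ (2:ℝ))) := by
    intro u
    unfold G
    rw [Real.rpow_zero, Real.rpow_two, one_mul]
    congr 2
    ring
  simp_rw [e]
  rw [integral_const_mul, h]
  norm_num
  rw [Real.rpow_neg_one]
  field_simp

lemma int2 (q : ℝ) (hq : 0 < q) : ∫ u : E2, ‖u‖ ^ 2 * G q u = 4 * q := by
  have h := moment 2 (by norm_num) (1 / (4 * q)) (by positivity)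
  have e : ∀ u : E2, ‖u‖ ^ 2 * G q u = (4 * π * q)⁻¹ * (‖u‖ ^ (2:ℝ) * Real.exp (-(1 / (4 * q)) * ‖u‖ ^ (2:ℝ))) := by
    intro u
    unfold G
    rw [Real.rpow_two, show -‖u‖ ^ 2 / (4 * q) = -(1 / (4 * q)) * ‖u‖ ^ 2 by ring]
    ring
  simp_rw [e]
  rw [integral_const_mul, h]
  have : Real.Gamma ((2 + 2) / 2) = 1 := by norm_num
  rw [this, show (-(2 + 2) / 2 : ℝ) = -(2:ℕ) by norm_num, Real.rpow_neg (by positivity), Real.rpow_natCast]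
  field_simp

lemma integrable0 (q : ℝ) (hq : 0 < q) : Integrable (fun u : E2 => G q u) := by
  apply Integrable.of_integral_ne_zero
  rw [int0 q hq]; norm_num

lemma integrable2 (q : ℝ) (hq : 0 < q) : Integrable (fun u : E2 => ‖u‖ ^ 2 * G q u) := by
  apply Integrable.of_integral_ne_zero
  rw [int2 q hq]; positivity

lemma G_nonneg (q : ℝ) (hq : 0 < q) (u : E2) : 0 ≤ G q u := by
  unfold G; positivity

lemma integrable1 (q : ℝ) (hq : 0 < q) (c : E2) :
    Integrable (fun u : E2 => inner ℝ c u * G q u) := by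
  refine Integrable.mono' (((integrable0 q hq).add (integrable2 q hq)).const_mul ‖c‖) ?_ ?_
  · apply Continuous.aestronglyMeasurable
    unfold G
    fun_prop
  · refine Eventually.of_forall fun u => ?_
    have h1 := abs_real_inner_le_norm c u
    have h2 := G_nonneg q hq u
    simp only [Pi.add_apply, norm_mul, Real.norm_eq_abs, abs_of_nonneg h2]
    have h3 : ‖u‖ ≤ 1 + ‖u‖ ^ 2 := by nlinarith [sq_nonneg (‖u‖ - 1)]
    calc |inner ℝ c u| * G q u ≤ (‖c‖ * (1 + ‖u‖ ^ 2)) * G q u := by gcongr; exact h1.trans (by gcongr)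
      _ = _ := by ring

lemma int1 (q : ℝ) (c : E2) : ∫ u : E2, inner ℝ c u * G q u = 0 := by
  have h := integral_neg_eq_self (fun u : E2 => inner ℝ c u * G q u) volume
  have e : ∀ u : E2, inner ℝ c (-u) * G q (-u) = -(inner ℝ c u * G q u) := by
    intro u; simp [G]
  simp_rw [e] at h
  rw [integral_neg] at h
  linarith

lemma G_mul (a r : ℝ) (ha : 0 < a) (hr : 0 < r) (x u : E2) :
    G a (x - (u + (r / (a + r)) • x)) * G r (u + (r / (a + r)) • x)
      = G (a + r) x * G (a * r / (a + r)) u := by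
  have e : x - (u + (r / (a + r)) • x) = (a / (a + r)) • x - u := by
    have : x = (a / (a + r)) • x + (r / (a + r)) • x := by
      rw [← add_smul, ← add_div, div_self (by positivity), one_smul]
    nth_rw 1 [this]
    abel
  rw [e]
  unfold G
  rw [mul_mul_mul_comm, mul_mul_mul_comm (4 * π * (a + r))⁻¹, ← Real.exp_add, ← Real.exp_add]
  congr 1
  · field_simp
  · congr 1
    rw [norm_sub_sq_real, norm_add_sq_real, norm_smul, norm_smul, inner_smul_left, inner_smul_right,
      real_inner_comm, mul_pow, mul_pow, Real.norm_eq_abs, Real.norm_eq_abs, sq_abs, sq_abs]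
    simp
    field_simp
    ring

lemma conv_grad (a r : ℝ) (ha : 0 < a) (hr : 0 < r) (x : E2) :
    ∫ y : E2, ∑ j : Fin 2, pd j (G a) (x - y) * pd j (G r) y = lap (G (a + r)) x := by
  rw [← integral_add_right_eq_self _ ((r / (a + r)) • x), lap_G _ (by positivity)]
  set k := r / (a + r) with hk
  set q := a * r / (a + r) with hq'
  have hq : 0 < q := by positivity
  have e : ∀ u : E2, ∑ j : Fin 2, pd j (G a) (x - (u + k • x)) * pd j (G r) (u + k • x)
      = (1 / (4 * a * r) * G (a + r) x) * (k * (1 - k) * ‖x‖ ^ 2 * G q u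
        + inner ℝ ((1 - 2 * k) • x) u * G q u - ‖u‖ ^ 2 * G q u) := by
    intro u
    have h := G_mul a r ha hr x u
    rw [← hk, ← hq'] at h
    have : ∀ p w : E2, (1 / (4 * a * r)) * inner ℝ p w * (G a p * G r w) =
        ∑ j : Fin 2, pd j (G a) p * pd j (G r) w := by
      intro p w
      simp [pd_G, PiLp.inner_apply]
      field_simp
      ring
    rw [← this, h]
    have h2 : inner ℝ (x - (u + k • x)) (u + k • x) = k * (1 - k) * ‖x‖ ^ 2
        + inner ℝ ((1 - 2 * k) • x) u - ‖u‖ ^ 2 := by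
      simp only [inner_sub_left, inner_add_left, inner_add_right, inner_smul_left, inner_smul_right,
        real_inner_self_eq_norm_sq, real_inner_comm x u]
      simp
      ring
    rw [h2]
    ring
  simp_rw [e]
  rw [integral_const_mul, integral_sub, integral_add, integral_const_mul, int0 q hq, int1, int2 q hq]
  · rw [hk, hq']
    field_simp
    ring
  · exact (integrable0 q hq).const_mul _
  · exact integrable1 q hq _
  · exact ((integrable0 q hq).const_mul _).add (integrable1 q hq _)
  · exact integrable2 q hq

theorem grad_conv_kernel_grad (t s τ : ℝ) (ht : 0 < t) (hs : 0 < s) (hst : s < t)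
    (hτ : 0 ≤ τ) (x : E2) :
    ∫ y : E2, ∑ j : Fin 2, pd j (G (t - s)) (x - y) * (G s y * pd j (G (s + τ)) y)
      = s / (4 * π * (2 * s + τ) ^ 2) * lap (G (t - s ^ 2 / (2 * s + τ))) x := by
  have hr : 0 < s * (s + τ) / (2 * s + τ) := by positivity
  have key : ∀ j (y : E2), G s y * pd j (G (s + τ)) y
      = s / (4 * π * (2 * s + τ) ^ 2) * pd j (G (s * (s + τ) / (2 * s + τ))) y := by
    intro j y
    rw [pd_G, pd_G]
    have h : G s y * G (s + τ) y = 1 / (4 * π * (2 * s + τ)) * G (s * (s + τ) / (2 * s + τ)) y := by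
      unfold G
      rw [mul_mul_mul_comm, ← Real.exp_add, ← mul_assoc]
      congr 1
      · field_simp
      · congr 1
        field_simp
        ring
    have : G s y * (-(1 / (2 * (s + τ))) * (y j * G (s + τ) y))
        = -(1 / (2 * (s + τ))) * y j * (G s y * G (s + τ) y) := by ring
    simp only [this, h]
    field_simp
  have e : t - s ^ 2 / (2 * s + τ) = (t - s) + s * (s + τ) / (2 * s + τ) := by
    field_simp
    ring
  rw [e, ← conv_grad _ _ (by linarith) hr, ← integral_const_mul]
  congr 1
  funext y
  rw [Finset.mul_sum]
  refine Finset.sum_congr rfl fun j _ => ?_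
  rw [key]
  ring
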